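/- arXiv:2605.10451 — 2 statements merged into one kernel-verified Lean document; each statement's English description precedes it below -/
import Mathlib

section
/- Let N ≥ 1, M ≥ 1, let R : ZMod N × Fin M → ℂ, and let f : ZMod N → ℂ. If the density is uniform, p(x,m) = 1/M for all x ∈ ZMod N and m ∈ Fin M, then the discrete ABLE layer output g(x) = Σ_{m=1}^{M} √(p(x,m)) · (1/N) Σ_{k} e^{2πi k·x/N} R(k,m) Σ_{z} e^{−2πi k·z/N} √(p(z,m)) f(z) equals (1/M) Σ_{m=1}^{M} Σ_{z ∈ ZMod N} κ_m(x−z) f(z), where κ_m(d) = (1/N) Σ_{k ∈ ZMod N} e^{2πi k·d/N} R(k,m). That is, in the high-temperature (uniform-density) limit the ABLE operator reduces to the average of M Fourier Neural Operator branches. -/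
open Real

theorem able_exp_sub (N : ℕ) [NeZero N] (k x z : ZMod N) :
    Complex.exp (2 * (π : ℂ) * Complex.I * ((k.val : ℂ) * (((x - z : ZMod N).val : ℂ))) / N)
    = Complex.exp (2 * (π : ℂ) * Complex.I * ((k.val : ℂ) * (x.val : ℂ)) / N) *
      Complex.exp (-(2 * (π : ℂ) * Complex.I * ((k.val : ℂ) * (z.val : ℂ)) / N)) := by
  have h : (N : ℤ) ∣ ((x - z : ZMod N).val : ℤ) - ((x.val : ℤ) - (z.val : ℤ)) := by
    rw [← ZMod.intCast_zmod_eq_zero_iff_dvd]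
    push_cast
    simp [ZMod.natCast_zmod_val]
  obtain ⟨c, hc⟩ := h
  have hc' : ((x - z : ZMod N).val : ℂ) = (x.val : ℂ) - (z.val : ℂ) + N * c := by
    have h2 : (((x - z : ZMod N).val : ℤ) : ℂ) = (((x.val : ℤ) - (z.val : ℤ) + N * c : ℤ) : ℂ) := by
      congr 1
      linarith
    push_cast at h2
    exact h2
  have hN : (N : ℂ) ≠ 0 := Nat.cast_ne_zero.mpr (NeZero.ne N)
  rw [← Complex.exp_add, Complex.exp_eq_exp_iff_exists_int]
  refine ⟨(k.val : ℤ) * c, ?_⟩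
  rw [hc']
  push_cast
  field_simp
  ring

/-- **High-temperature (uniform-density) limit of the discrete ABLE layer.**
If `p(x,m) = 1/M` for all `x` and `m`, the ABLE layer output reduces to the average
of `M` Fourier Neural Operator branches:
`g(x) = (1/M) Σ_m Σ_z κ_m(x−z) f(z)` with `κ_m(d) = (1/N) Σ_k e^{2πik·d/N} R(k,m)`. -/
theorem able_uniform_density_is_average_fno (N : ℕ) [NeZero N] (M : ℕ) (hM : 1 ≤ M)
    (p : ZMod N → Fin M → ℝ) (hp : ∀ x m, p x m = 1 / M)
    (R : ZMod N → Fin M → ℂ) (f : ZMod N → ℂ) :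
    ∀ x : ZMod N,
      (∑ m : Fin M, (Real.sqrt (p x m) : ℂ) *
        ((N : ℂ)⁻¹ * ∑ k : ZMod N,
          Complex.exp (2 * (π : ℂ) * Complex.I * ((k.val : ℂ) * (x.val : ℂ)) / N) * R k m *
            ∑ z : ZMod N,
              Complex.exp (-(2 * (π : ℂ) * Complex.I * ((k.val : ℂ) * (z.val : ℂ)) / N)) *
                ((Real.sqrt (p z m) : ℂ) * f z)))
      = (M : ℂ)⁻¹ * ∑ m : Fin M, ∑ z : ZMod N,
          ((N : ℂ)⁻¹ * ∑ k : ZMod N,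
            Complex.exp (2 * (π : ℂ) * Complex.I *
              ((k.val : ℂ) * (((x - z : ZMod N).val : ℂ))) / N) * R k m) * f z := by
  intro x
  have hs : ((Real.sqrt (1 / (M : ℝ)) : ℝ) : ℂ) * ((Real.sqrt (1 / (M : ℝ)) : ℝ) : ℂ)
      = (M : ℂ)⁻¹ := by
    rw [← Complex.ofReal_mul, Real.mul_self_sqrt (by positivity)]
    simp
  simp only [hp, able_exp_sub]
  rw [Finset.mul_sum]
  refine Finset.sum_congr rfl fun m _ => ?_
  rw [← hs]
  generalize ((Real.sqrt (1 / (M : ℝ)) : ℝ) : ℂ) = s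
  simp only [Finset.mul_sum, Finset.sum_mul]
  rw [Finset.sum_comm]
  refine Finset.sum_congr rfl fun z _ => Finset.sum_congr rfl fun k _ => ?_
  ring
end

section
/- Let M ≥ 1 and let 0 = a_0 < a_1 < … < a_M = 1 be a partition of [0,1]. Let u : ℝ → ℝ be integrable on [0,1], of bounded variation on [0,1], and suppose eVariationOn u [a_{m−1}, a_m] ≤ V/M for each m = 1, …, M, where V ≥ 0. Define the piecewise-constant approximation ũ on [0,1) by ũ(x) = (1/(a_m − a_{m−1})) ∫_{a_{m−1}}^{a_m} u(t) dt for x ∈ [a_{m−1}, a_m). Then ∫_0^1 |u(x) − ũ(x)|² dx ≤ (V/M)², i.e. ‖u − ũ‖_{L²[0,1]} ≤ V/M. Thus an adaptive piecewise-constant representation with M learnable pieces approximates a bounded-variation target at rate O(V/M) in L², compared to the O(V/√K) rate of the K-mode Fourier truncation. -/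
open Real MeasureTheory

/-- **`L²` rate of adaptive piecewise-constant approximation of a BV function.**
Let `0 = a_0 < a_1 < … < a_M = 1` be a partition of `[0,1]` and let `u` be
integrable and of bounded variation on `[0,1]` with
`eVariationOn u [a_{m-1}, a_m] ≤ V/M` on each piece.  If `ũ` equals, on each
`[a_{m-1}, a_m)`, the average of `u` over that piece, then
`∫_0^1 |u − ũ|² ≤ (V/M)²`, i.e. `‖u − ũ‖_{L²[0,1]} ≤ V/M`:  an adaptive
piecewise-constant representation with `M` learnable pieces achieves rate `O(V/M)`. -/
theorem piecewise_average_L2_rate (M : ℕ) (hM : 1 ≤ M)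
    (a : Fin (M + 1) → ℝ) (ha0 : a 0 = 0) (haM : a (Fin.last M) = 1)
    (hmono : StrictMono a)
    (u : ℝ → ℝ)
    (hint : IntervalIntegrable u volume 0 1)
    (hbv : BoundedVariationOn u (Set.Icc 0 1))
    (V : ℝ) (hV : 0 ≤ V)
    (hpiece : ∀ m : Fin M,
      eVariationOn u (Set.Icc (a m.castSucc) (a m.succ)) ≤ ENNReal.ofReal (V / M))
    (ut : ℝ → ℝ)
    (hut : ∀ m : Fin M, ∀ x ∈ Set.Ico (a m.castSucc) (a m.succ),
      ut x = (1 / (a m.succ - a m.castSucc)) * ∫ t in (a m.castSucc)..(a m.succ), u t) :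
    ∫ x in (0:ℝ)..1, |u x - ut x| ^ 2 ≤ (V / M) ^ 2 := by
  have hC : 0 ≤ V / M := by positivity
  have hbound : ∀ x ∈ Set.Ico (0:ℝ) 1, |u x - ut x| ≤ V / M := by
    intro x hx
    have hex : ∀ k : Fin (M + 1), x < a k →
        ∃ m : Fin M, x ∈ Set.Ico (a m.castSucc) (a m.succ) := by
      intro k
      induction k using Fin.induction with
      | zero => intro h; rw [ha0] at h; exact absurd hx.1 (not_le.mpr h)
      | succ i ih =>
        intro h
        by_cases h' : x < a i.castSucc
        · exact ih h'
        · exact ⟨i, not_lt.mp h', h⟩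
    obtain ⟨m, hm⟩ := hex (Fin.last M) (by rw [haM]; exact hx.2)
    have hlt : a m.castSucc < a m.succ := hmono Fin.castSucc_lt_succ
    have h0 : 0 ≤ a m.castSucc := by rw [← ha0]; exact hmono.monotone (Fin.zero_le _)
    have h1 : a m.succ ≤ 1 := by rw [← haM]; exact hmono.monotone (Fin.le_last _)
    rw [hut m x hm]
    set p := a m.castSucc with hp
    set q := a m.succ with hq
    have hi : IntervalIntegrable u volume p q := by
      apply hint.mono_set
      rw [Set.uIcc_of_le hlt.le, Set.uIcc_of_le zero_le_one]
      exact Set.Icc_subset_Icc h0 h1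
    have hpt : ∀ t ∈ Set.uIoc p q, ‖u x - u t‖ ≤ V / M := by
      intro t ht
      rw [Set.uIoc_of_le hlt.le] at ht
      have h := (eVariationOn.edist_le u (s := Set.Icc p q) (x := x) (y := t)
        ⟨hm.1, hm.2.le⟩ ⟨ht.1.le, ht.2⟩).trans (hpiece m)
      rw [edist_dist] at h
      have := (ENNReal.ofReal_le_ofReal_iff hC).1 h
      rwa [dist_eq_norm] at this
    have hI := intervalIntegral.norm_integral_le_of_norm_le_const hpt
    rw [intervalIntegral.integral_sub intervalIntegrable_const hi,
      intervalIntegral.integral_const, smul_eq_mul, Real.norm_eq_abs] at hI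
    have hL : 0 < q - p := sub_pos.mpr hlt
    rw [abs_of_pos hL] at hI
    have he : u x - 1 / (q - p) * ∫ t in p..q, u t
        = ((q - p) * u x - ∫ t in p..q, u t) / (q - p) := by
      field_simp
    rw [he, abs_div, abs_of_pos hL, div_le_iff₀ hL]
    exact hI
  have key : ‖∫ x in (0:ℝ)..1, |u x - ut x| ^ 2‖ ≤ (V / M) ^ 2 * |(1:ℝ) - 0| := by
    apply intervalIntegral.norm_integral_le_of_norm_le_const_ae
    have hne : ∀ᵐ x : ℝ, x ≠ 1 := by
      simp [ae_iff]
    filter_upwards [hne] with x hx1 hx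
    rw [Set.uIoc_of_le zero_le_one] at hx
    have hb := hbound x ⟨hx.1.le, lt_of_le_of_ne hx.2 hx1⟩
    rw [Real.norm_eq_abs, abs_of_nonneg (by positivity)]
    gcongr
  have := (le_abs_self _).trans key
  simpa using this
end
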